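/- Let G = (V, E) be a directed bipartite graph with bipartition V = A ∪ B (every edge goes from A to B or from B to A). Assume |A| = |B| = ℓ + 1 with ℓ + 1 > 2, and that every vertex has outdegree exactly ℓ. Then there exists a vertex a ∈ A from which there is a directed path to every other vertex of A, or there exists a vertex b ∈ B from which there is a directed path to every other vertex of B. -/

import Mathlib

/-!
Pick any `a₀ ∈ A`. Either `a₀` reaches all of `A`, or it fails to reach some `p ∈ A`, and then `p`
itself works. Indeed no out-neighbour of `a₀` sends an edge to `p`, so each of them, having
outdegree `ℓ = |A \ {p}|`, sends edges to all of `A \ {p}`. Since `2ℓ > ℓ + 1 = |B|`, the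
vertices `a₀` and `p` share an out-neighbour `b ∈ B`, and `p → b → a'` for every `a' ∈ A \ {p}`.
So the first alternative always holds.
-/

/-- **Lemma.** Let `G = (V, E)` be a directed bipartite graph with bipartition
`V = A ∪ B`, `|A| = |B| = ℓ + 1 > 2`, in which every vertex has outdegree exactly `ℓ`.
Then some vertex `a ∈ A` has a directed path to every other vertex of `A`, or some
vertex `b ∈ B` has a directed path to every other vertex of `B`. -/
theorem bipartite_graph_connecting_vertex
    {V : Type*} [Fintype V] [DecidableEq V]
    (A B : Finset V) (hdisj : Disjoint A B) (hcover : A ∪ B = Finset.univ)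
    (E : V → V → Prop) [DecidableRel E]
    (hbip : ∀ u v : V, E u v → (u ∈ A ∧ v ∈ B) ∨ (u ∈ B ∧ v ∈ A))
    (ℓ : ℕ) (hA : A.card = ℓ + 1) (hB : B.card = ℓ + 1) (hℓ : 2 < ℓ + 1)
    (hout : ∀ v : V, (Finset.univ.filter fun w => E v w).card = ℓ) :
    (∃ a ∈ A, ∀ a' ∈ A, a' ≠ a → Relation.ReflTransGen E a a') ∨
    (∃ b ∈ B, ∀ b' ∈ B, b' ≠ b → Relation.ReflTransGen E b b') := by
  left
  have hAB : ∀ {v}, v ∈ A → v ∉ B := fun h h' => Finset.disjoint_left.mp hdisj h h'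
  obtain ⟨a₀, ha₀⟩ : A.Nonempty := Finset.card_pos.mp (by omega)
  by_cases hgood : ∀ a' ∈ A, a' ≠ a₀ → Relation.ReflTransGen E a₀ a'
  · exact ⟨a₀, ha₀, hgood⟩
  push Not at hgood
  obtain ⟨p, hp, -, hnot⟩ := hgood
  have hsub : ∀ a ∈ A, (Finset.univ.filter fun w => E a w) ⊆ B := by
    intro a ha w hw
    rcases hbip a w (Finset.mem_filter.mp hw).2 with h | h
    · exact h.2
    · exact absurd h.1 (hAB ha)
  obtain ⟨b, hb⟩ : ((Finset.univ.filter fun w => E a₀ w) ∩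
      (Finset.univ.filter fun w => E p w)).Nonempty := by
    apply Finset.inter_nonempty_of_card_lt_card_add_card (hsub a₀ ha₀) (hsub p hp)
    rw [hout, hout, hB]
    omega
  have hbB : b ∈ B := hsub a₀ ha₀ (Finset.mem_inter.mp hb).1
  simp only [Finset.mem_inter, Finset.mem_filter, Finset.mem_univ, true_and] at hb
  have hEb : (Finset.univ.filter fun w => E b w) = A.erase p := by
    apply Finset.eq_of_subset_of_card_le
    · intro w hw
      have hw := (Finset.mem_filter.mp hw).2
      refine Finset.mem_erase.mpr ⟨?_, ?_⟩
      · rintro rfl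
        exact hnot ((Relation.ReflTransGen.single hb.1).tail hw)
      · rcases hbip b w hw with h | h
        · exact absurd hbB (hAB h.1)
        · exact h.2
    · rw [hout, Finset.card_erase_of_mem hp, hA]
      omega
  refine ⟨p, hp, fun a' ha' hne => (Relation.ReflTransGen.single hb.2).tail ?_⟩
  have : a' ∈ Finset.univ.filter fun w => E b w := hEb ▸ Finset.mem_erase.mpr ⟨hne, ha'⟩
  exact (Finset.mem_filter.mp this).2
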